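/- arXiv:2507.14113 — 3 statements merged into one kernel-verified Lean document; each statement's English description precedes it below -/
import Mathlib

section
/- Let d ∈ ℕ, let U ∈ GL_d(ℤ) be a unipotent matrix, and let μ be an ergodic U-invariant Borel probability measure on 𝕋^d = ℝ^d/ℤ^d. Then there exist c ∈ ℕ and a sequence (x_n)_{n=1}^∞ in 𝕋^d such that U^{cn} x_n = x_n for every n ∈ ℕ and the empirical measures m_{U, x_n, cn} converge to μ in the weak-* topology as n → ∞. -/
open MeasureTheory Topology Filter

/-- The `d`-dimensional torus `ℝ^d/ℤ^d`. -/
abbrev Torus (d : ℕ) := Fin d → AddCircle (1 : ℝ)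

/-- The automorphism of the torus induced by an integer matrix. -/
noncomputable def toralAuto {d : ℕ} (U : Matrix (Fin d) (Fin d) ℤ) : Torus d → Torus d :=
  fun x i => ∑ j, U i j • x j

noncomputable def cavg (M : ℕ) (v : ℕ → ℂ) : ℂ := (M : ℂ)⁻¹ * ∑ i ∈ Finset.range M, v i

lemma cavg_norm_le (M : ℕ) (v : ℕ → ℂ) (hv : ∀ i, ‖v i‖ ≤ 1) : ‖cavg M v‖ ≤ 1 := by
  unfold cavg
  rw [norm_mul, norm_inv, Complex.norm_natCast]
  have h1 : ‖∑ i ∈ Finset.range M, v i‖ ≤ M := by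
    calc _ ≤ ∑ i ∈ Finset.range M, ‖v i‖ := norm_sum_le _ _
      _ ≤ ∑ i ∈ Finset.range M, (1:ℝ) := Finset.sum_le_sum fun i _ => hv i
      _ = M := by simp
  calc _ ≤ (M:ℝ)⁻¹ * M := by gcongr
    _ ≤ 1 := inv_mul_le_one

lemma cavg_shift_bound (M h : ℕ) (v : ℕ → ℂ) (hv : ∀ i, ‖v i‖ ≤ 1) :
    ‖cavg M (fun i => v (i + h)) - cavg M v‖ ≤ (M : ℝ)⁻¹ * (2 * h) := by
  unfold cavg
  have e1 : ∑ i ∈ Finset.range (h + M), v i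
      = ∑ i ∈ Finset.range h, v i + ∑ i ∈ Finset.range M, v (i + h) := by
    rw [Finset.sum_range_add]; simp [add_comm]
  have e2 : ∑ i ∈ Finset.range (h + M), v i
      = ∑ i ∈ Finset.range M, v i + ∑ i ∈ Finset.range h, v (M + i) := by
    rw [add_comm h M, Finset.sum_range_add]
  have e3 : ∑ i ∈ Finset.range M, v (i + h) - ∑ i ∈ Finset.range M, v i
      = ∑ i ∈ Finset.range h, v (M + i) - ∑ i ∈ Finset.range h, v i := by
    linear_combination e2 - e1
  rw [← mul_sub, e3, norm_mul, norm_inv, Complex.norm_natCast]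
  have b : ∀ w : ℕ → ℂ, (∀ i, ‖w i‖ ≤ 1) → ‖∑ i ∈ Finset.range h, w i‖ ≤ h := by
    intro w hw
    calc _ ≤ ∑ i ∈ Finset.range h, ‖w i‖ := norm_sum_le _ _
      _ ≤ ∑ i ∈ Finset.range h, (1:ℝ) := Finset.sum_le_sum fun i _ => hw i
      _ = h := by simp
  have := norm_sub_le (∑ i ∈ Finset.range h, v (M + i)) (∑ i ∈ Finset.range h, v i)
  have b1 := b (fun i => v (M + i)) (fun i => hv _)
  have b2 := b v hv
  gcongr
  linarith

lemma cavg_shift {M : ℕ → ℕ} (hM : Tendsto M atTop atTop) (v : ℕ → ℕ → ℂ)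
    (hv : ∀ n i, ‖v n i‖ ≤ 1) (h : ℕ) :
    Tendsto (fun n => cavg (M n) (fun i => v n (i + h)) - cavg (M n) (v n)) atTop (𝓝 0) := by
  apply squeeze_zero_norm (fun n => cavg_shift_bound (M n) h (v n) (hv n))
  have h1 : Tendsto (fun n => ((M n : ℕ) : ℝ)⁻¹) atTop (𝓝 0) :=
    tendsto_inv_atTop_zero.comp (tendsto_natCast_atTop_atTop.comp hM)
  simpa using h1.mul_const (2 * (h : ℝ))

lemma cavg_sum {ι : Type*} (s : Finset ι) (M : ℕ) (v : ι → ℕ → ℂ) :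
    cavg M (fun i => ∑ h ∈ s, v h i) = ∑ h ∈ s, cavg M (v h) := by
  unfold cavg
  rw [Finset.sum_comm, Finset.mul_sum]

lemma cavg_mul_left (M : ℕ) (c : ℂ) (v : ℕ → ℂ) :
    cavg M (fun i => c * v i) = c * cavg M v := by
  unfold cavg
  rw [← Finset.mul_sum]; ring

/-- Cauchy-Schwarz for averages. -/
lemma cavg_sq (M : ℕ) (w : ℕ → ℂ) :
    ‖cavg M w‖ ^ 2 ≤ ‖cavg M (fun i => w i * (starRingEnd ℂ) (w i))‖ := by
  unfold cavg
  have e : ∑ i ∈ Finset.range M, w i * (starRingEnd ℂ) (w i)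
      = ((∑ i ∈ Finset.range M, ‖w i‖ ^ 2 : ℝ) : ℂ) := by
    push_cast
    exact Finset.sum_congr rfl fun i _ => by rw [Complex.mul_conj']
  rw [e, norm_mul, norm_mul, norm_inv, Complex.norm_natCast, Complex.norm_real, Real.norm_eq_abs,
    abs_of_nonneg (by positivity)]
  have h1 : ‖∑ i ∈ Finset.range M, w i‖ ^ 2 ≤ (M : ℝ) * ∑ i ∈ Finset.range M, ‖w i‖ ^ 2 := by
    have h2 := sq_sum_le_card_mul_sum_sq (s := Finset.range M) (f := fun i => ‖w i‖)
    have h3 := norm_sum_le (Finset.range M) w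
    simp only [Finset.card_range] at h2
    exact (pow_le_pow_left₀ (norm_nonneg _) h3 2).trans h2
  rcases Nat.eq_zero_or_pos M with h0 | h0
  · subst h0; simp
  have hM : (0:ℝ) < M := by exact_mod_cast h0
  rw [mul_pow]
  calc _ ≤ ((M:ℝ)⁻¹)^2 * ((M : ℝ) * ∑ i ∈ Finset.range M, ‖w i‖ ^ 2) := by gcongr
    _ = _ := by field_simp

/-- van der Corput. -/
lemma vdc {M : ℕ → ℕ} (hM : Tendsto M atTop atTop) (u : ℕ → ℕ → ℂ)
    (hu : ∀ n i, ‖u n i‖ = 1)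
    (H : ∀ h : ℕ, 0 < h → Tendsto (fun n => cavg (M n)
      (fun i => u n (i + h) * (starRingEnd ℂ) (u n i))) atTop (𝓝 0)) :
    Tendsto (fun n => cavg (M n) (u n)) atTop (𝓝 0) := by
  have hle : ∀ n i, ‖u n i‖ ≤ 1 := fun n i => (hu n i).le
  -- off-diagonal
  have off1 : ∀ h h' : ℕ, h' < h → Tendsto (fun n => cavg (M n)
      (fun i => u n (i + h) * (starRingEnd ℂ) (u n (i + h')))) atTop (𝓝 0) := by
    intro h h' hh
    have := cavg_shift hM (fun n i => u n (i + (h - h')) * (starRingEnd ℂ) (u n i))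
      (fun n i => by simp [hu]) h'
    have h2 := this.add (H (h - h') (by omega))
    simp only [sub_add_cancel, add_zero] at h2
    refine h2.congr fun n => ?_
    congr 1; funext i
    rw [show i + h' + (h - h') = i + h by omega]
  have off2 : ∀ h h' : ℕ, h < h' → Tendsto (fun n => cavg (M n)
      (fun i => u n (i + h) * (starRingEnd ℂ) (u n (i + h')))) atTop (𝓝 0) := by
    intro h h' hh
    have h3 := (Complex.continuous_conj.tendsto 0).comp (off1 h' h hh)
    simp only [map_zero] at h3
    refine h3.congr fun n => ?_
    simp only [Function.comp, cavg, map_mul, map_inv₀, map_sum, Complex.conj_conj, map_natCast]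
    congr 1
    exact Finset.sum_congr rfl fun i _ => mul_comm _ _
  have diag : ∀ h : ℕ, Tendsto (fun n => cavg (M n)
      (fun i => u n (i + h) * (starRingEnd ℂ) (u n (i + h)))) atTop (𝓝 1) := by
    intro h
    apply tendsto_const_nhds.congr'
    filter_upwards [hM.eventually_gt_atTop 0] with n hn
    have : (M n : ℂ) ≠ 0 := by exact_mod_cast hn.ne'
    simp [cavg, Complex.mul_conj', hu, this]
  rw [Metric.tendsto_atTop]
  intro ε hε
  obtain ⟨K, hK⟩ := exists_nat_gt (4 / (ε / 2) ^ 2)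
  have hε2 : 0 < (ε / 2) ^ 2 := by positivity
  have hK0 : (0:ℝ) < K := lt_trans (by positivity) hK
  have hKc : (K : ℂ) ≠ 0 := by exact_mod_cast hK0.ne'
  set B : ℕ → ℂ := fun n => cavg (M n) (fun i => (K:ℂ)⁻¹ * ∑ h ∈ Finset.range K, u n (i + h))
    with hB
  have hdiff : Tendsto (fun n => B n - cavg (M n) (u n)) atTop (𝓝 0) := by
    have h1 : Tendsto (fun n => (K:ℂ)⁻¹ * ∑ h ∈ Finset.range K,
        (cavg (M n) (fun i => u n (i + h)) - cavg (M n) (u n))) atTop (𝓝 ((K:ℂ)⁻¹ *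
          ∑ h ∈ Finset.range K, 0)) :=
      (tendsto_finsetSum _ fun h _ => cavg_shift hM u hle h).const_mul _
    simp only [Finset.sum_const_zero, mul_zero] at h1
    refine h1.congr fun n => ?_
    simp only [hB]
    rw [cavg_mul_left, cavg_sum, Finset.sum_sub_distrib, Finset.sum_const, Finset.card_range,
      nsmul_eq_mul, mul_sub, inv_mul_cancel_left₀ hKc]
  have hsq : Tendsto (fun n => cavg (M n) (fun i =>
      ((K:ℂ)⁻¹ * ∑ h ∈ Finset.range K, u n (i + h)) *
        (starRingEnd ℂ) ((K:ℂ)⁻¹ * ∑ h ∈ Finset.range K, u n (i + h)))) atTop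
        (𝓝 ((K:ℂ)⁻¹)) := by
    have h1 : Tendsto (fun n => (K:ℂ)⁻¹ * (K:ℂ)⁻¹ * ∑ h ∈ Finset.range K, ∑ h' ∈ Finset.range K,
        cavg (M n) (fun i => u n (i + h) * (starRingEnd ℂ) (u n (i + h')))) atTop
        (𝓝 ((K:ℂ)⁻¹ * (K:ℂ)⁻¹ * ∑ h ∈ Finset.range K, ∑ h' ∈ Finset.range K,
          if h = h' then 1 else 0)) := by
      refine (tendsto_finsetSum _ fun h _ => tendsto_finsetSum _ fun h' _ => ?_).const_mul _
      rcases lt_trichotomy h h' with hlt | heq | hgt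
      · rw [if_neg hlt.ne]; exact off2 h h' hlt
      · subst heq; rw [if_pos rfl]; exact diag h
      · rw [if_neg hgt.ne']; exact off1 h h' hgt
    have h2 : (K:ℂ)⁻¹ * (K:ℂ)⁻¹ * ∑ h ∈ Finset.range K, ∑ h' ∈ Finset.range K,
          (if h = h' then (1:ℂ) else 0) = (K:ℂ)⁻¹ := by
      have : ∑ h ∈ Finset.range K, ∑ h' ∈ Finset.range K,
          (if h = h' then (1:ℂ) else 0) = K := by
        rw [Finset.sum_congr rfl (g := fun _ => (1:ℂ))]
        · simp
        · intro h hh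
          rw [Finset.sum_ite_eq, if_pos hh]
      rw [this]; field_simp
    rw [h2] at h1
    refine h1.congr fun n => ?_
    rw [← Finset.sum_congr rfl (fun h _ => cavg_sum (Finset.range K) (M n) _), ← cavg_sum,
      ← cavg_mul_left]
    congr 1; funext i
    simp only [map_mul, map_inv₀, map_natCast, map_sum]
    rw [mul_mul_mul_comm, Finset.sum_mul_sum]
  have hsq' := hsq.norm
  have hlt : ‖(K:ℂ)⁻¹‖ < (ε / 2) ^ 2 := by
    rw [norm_inv, Complex.norm_natCast, inv_lt_comm₀ hK0 hε2]
    refine lt_trans ?_ hK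
    rw [inv_eq_one_div]
    gcongr
    norm_num
  have hd' := hdiff.norm
  rw [norm_zero] at hd'
  obtain ⟨N, hN⟩ := eventually_atTop.1 ((hsq'.eventually_lt_const hlt).and
    (hd'.eventually_lt_const (half_pos hε)))
  refine ⟨N, fun n hn => ?_⟩
  obtain ⟨a1, a2⟩ := hN n hn
  rw [dist_zero_right]
  have a3 : ‖B n‖ < ε / 2 := by
    refine lt_of_pow_lt_pow_left₀ 2 (half_pos hε).le ?_
    exact (cavg_sq (M n) _).trans_lt a1
  have a4 : cavg (M n) (u n) = B n - (B n - cavg (M n) (u n)) := by ring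
  rw [a4]
  exact (norm_sub_le _ _).trans_lt (by linarith)

abbrev AC := AddCircle (1 : ℝ)

noncomputable def ee (θ : AC) : ℂ := (AddCircle.toCircle θ : ℂ)

lemma ee_add (x y : AC) : ee (x + y) = ee x * ee y := by
  simp [ee, AddCircle.toCircle_add]

lemma ee_zero : ee 0 = 1 := by simp [ee]

lemma ee_norm (x : AC) : ‖ee x‖ = 1 := Circle.norm_coe _

lemma ee_mul_conj (x : AC) : ee x * (starRingEnd ℂ) (ee x) = 1 := by
  rw [Complex.mul_conj', ee_norm]; simp

lemma ee_cont : Continuous ee := by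
  unfold ee
  exact continuous_induced_dom.comp AddCircle.continuous_toCircle

lemma ee_eq_one {x : AC} (h : ee x = 1) : x = 0 := by
  apply AddCircle.injective_toCircle (T := 1) one_ne_zero
  rw [AddCircle.toCircle_zero]
  exact Subtype.ext h

lemma dvd_choose_aux (q J m : ℕ) (hm : 1 ≤ m) (hmJ : m ≤ J) :
    q ∣ (q * J.factorial).choose m := by
  obtain ⟨t, ht⟩ := Nat.dvd_factorial hm hmJ
  rcases Nat.eq_zero_or_pos q with h0 | h0
  · subst h0
    rw [zero_mul, Nat.choose_eq_zero_of_lt (by omega)]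
  obtain ⟨P, hP⟩ : ∃ P, q * J.factorial = P + 1 :=
    ⟨q * J.factorial - 1, by have := Nat.mul_pos h0 J.factorial_pos; omega⟩
  obtain ⟨k, rfl⟩ : ∃ k, m = k + 1 := ⟨m - 1, by omega⟩
  have h := Nat.add_one_mul_choose_eq P k
  rw [hP]
  refine ⟨t * P.choose k, ?_⟩
  apply Nat.eq_of_mul_eq_mul_right (Nat.succ_pos k)
  change (P + 1).choose (k + 1) * (k + 1) = _ * (k + 1)
  rw [← h, ← hP, ht]
  ring

noncomputable def bpoly (J : ℕ) (a : ℕ → AC) (i : ℕ) : AC :=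
  ∑ j ∈ Finset.range J, i.choose j • a j

noncomputable def bdiff (J h : ℕ) (a : ℕ → AC) (l : ℕ) : AC :=
  ∑ j ∈ Finset.Ioo l J, h.choose (j - l) • a j

lemma bpoly_shift (J : ℕ) (a : ℕ → AC) (i h : ℕ) :
    bpoly J a (i + h) = bpoly J a i + bpoly J (bdiff J h a) i := by
  unfold bpoly bdiff
  have h1 : ∀ j, (i + h).choose j • a j
      = i.choose j • a j + ∑ l ∈ Finset.range j, i.choose l • (h.choose (j - l) • a j) := by
    intro j
    rw [Nat.add_choose_eq, Finset.Nat.sum_antidiagonal_eq_sum_range_succ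
      (fun x y => i.choose x * h.choose y), Finset.sum_range_succ, add_smul, Finset.sum_smul,
      add_comm]
    simp [mul_smul]
  rw [Finset.sum_congr rfl fun j _ => h1 j, Finset.sum_add_distrib]
  congr 1
  simp_rw [Finset.smul_sum]
  apply Finset.sum_comm'
  intro x y
  simp only [Finset.mem_range, Finset.mem_Ioo]
  omega

abbrev Tor : AddSubgroup AC := AddCommGroup.torsion AC

lemma mem_Tor {x : AC} : x ∈ Tor ↔ ∃ q : ℕ, 0 < q ∧ q • x = 0 :=
  isOfFinAddOrder_iff_nsmul_eq_zero

lemma nsmul_mem_Tor {x : AC} {h : ℕ} (hh : 0 < h) (hx : h • x ∈ Tor) : x ∈ Tor := by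
  obtain ⟨q, hq, hq'⟩ := mem_Tor.1 hx
  exact mem_Tor.2 ⟨q * h, Nat.mul_pos hq hh, by rw [mul_smul, hq']⟩

lemma common_order (s : Finset ℕ) (α : ℕ → AC) (hα : ∀ j ∈ s, α j ∈ Tor) :
    ∃ q : ℕ, 0 < q ∧ ∀ j ∈ s, q • α j = 0 := by
  have : ∀ j, ∃ q : ℕ, 0 < q ∧ (j ∈ s → q • α j = 0) := by
    intro j
    by_cases hj : j ∈ s
    · obtain ⟨q, h1, h2⟩ := mem_Tor.1 (hα j hj)
      exact ⟨q, h1, fun _ => h2⟩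
    · exact ⟨1, one_pos, fun h => absurd h hj⟩
  choose q hq hq' using this
  refine ⟨∏ j ∈ s, q j, Finset.prod_pos fun j _ => hq j, fun j hj => ?_⟩
  obtain ⟨t, ht⟩ := Finset.dvd_prod_of_mem q hj
  rw [ht, mul_comm, mul_smul, hq' j hj, smul_zero]

lemma bdiff_top (J h l : ℕ) (a : ℕ → AC) (hl : l + 1 < J) :
    bdiff J h a l = h • a (l + 1) + ∑ j ∈ Finset.Ioo (l + 1) J, h.choose (j - l) • a j := by
  unfold bdiff
  have : Finset.Ioo l J = insert (l + 1) (Finset.Ioo (l + 1) J) := by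
    ext x; simp only [Finset.mem_Ioo, Finset.mem_insert]; omega
  rw [this, Finset.sum_insert (by simp)]
  simp

lemma choose_smul_zero {q J m : ℕ} (hm : 1 ≤ m) (hmJ : m ≤ J) {x : AC} (hx : q • x = 0) :
    (q * J.factorial).choose m • x = 0 := by
  obtain ⟨t, ht⟩ := dvd_choose_aux q J m hm hmJ
  rw [ht, mul_comm, mul_smul, hx, smul_zero]

lemma equi {M : ℕ → ℕ} (hM : Tendsto M atTop atTop) (J : ℕ) (D : ℕ) :
    ∀ (a : ℕ → ℕ → AC) (α : ℕ → AC), D + 1 < J →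
      (∀ j, D + 1 < j → j < J → α j ∈ Tor ∧ ∀ n, a n j = α j) →
      α (D + 1) ∉ Tor → Tendsto (fun n => a n (D + 1)) atTop (𝓝 (α (D + 1))) →
      Tendsto (fun n => cavg (M n) (fun i => ee (bpoly J (a n) i))) atTop (𝓝 0) := by
  induction D with
  | zero =>
    intro a α hJ htor hnt hlim
    obtain ⟨q, hq, hq'⟩ := common_order (Finset.Ioo 1 J) α (fun j hj => by
      simp only [Finset.mem_Ioo] at hj; exact (htor j (by omega) hj.2).1)
    set P := q * J.factorial with hP
    have hP0 : 0 < P := Nat.mul_pos hq J.factorial_pos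
    have key : ∀ n i, bpoly J (a n) (i + P) = bpoly J (a n) i + P • a n 1 := by
      intro n i
      rw [bpoly_shift]
      congr 1
      unfold bpoly
      have hz : ∀ l j, 1 < j → l < j → j < J → P.choose (j - l) • a n j = 0 := by
        intro l j h1 h2 h3
        rw [(htor j (by omega) h3).2 n]
        exact choose_smul_zero (by omega) (by omega) (hq' j (by simp; omega))
      rw [Finset.sum_eq_single 0]
      · rw [bdiff_top J P 0 _ (by omega), Finset.sum_eq_zero]
        · simp
        · intro j hj
          simp only [Finset.mem_Ioo] at hj
          exact hz 0 j (by omega) (by omega) hj.2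
      · intro l _ hl
        unfold bdiff
        rw [Finset.sum_eq_zero, smul_zero]
        intro j hj
        simp only [Finset.mem_Ioo] at hj
        exact hz l j (by omega) (by omega) hj.2
      · intro h; simp at h; omega
    have h1 := cavg_shift hM (fun n i => ee (bpoly J (a n) i)) (fun n i => (ee_norm _).le) P
    have h2 : Tendsto (fun n => ee (P • a n 1) - 1) atTop (𝓝 (ee (P • α 1) - 1)) :=
      ((ee_cont.tendsto _).comp (hlim.const_smul P)).sub_const 1
    have hne : ee (P • α 1) - 1 ≠ 0 := by
      intro h
      have := ee_eq_one (sub_eq_zero.1 h)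
      exact hnt (mem_Tor.2 ⟨P, hP0, this⟩)
    have h3 := h1.div h2 hne
    rw [zero_div] at h3
    refine h3.congr' ?_
    filter_upwards [h2.eventually_ne hne] with n hn
    simp only [Pi.div_apply]
    rw [div_eq_iff hn]
    simp only [key, ee_add]
    rw [show (fun i => ee (bpoly J (a n) i) * ee (P • a n 1))
      = fun i => ee (P • a n 1) * ee (bpoly J (a n) i) from funext fun i => mul_comm _ _,
      cavg_mul_left]
    ring
  | succ D ih =>
    intro a α hJ htor hnt hlim
    apply vdc hM _ (fun n i => ee_norm _)
    intro h hh
    have := ih (fun n => bdiff J h (a n)) (bdiff J h α) (by omega) ?_ ?_ ?_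
    · refine this.congr fun n => ?_
      congr 1; funext i
      rw [bpoly_shift, ee_add, mul_right_comm, ee_mul_conj, one_mul]
    · intro l hl hlJ
      constructor
      · refine AddSubgroup.sum_mem _ fun j hj => ?_
        simp only [Finset.mem_Ioo] at hj
        exact AddSubgroup.nsmul_mem _ (htor j (by omega) hj.2).1 _
      · intro n
        refine Finset.sum_congr rfl fun j hj => ?_
        simp only [Finset.mem_Ioo] at hj
        rw [(htor j (by omega) hj.2).2 n]
    · rw [bdiff_top J h (D + 1) _ (by omega)]
      intro hmem
      apply hnt
      refine nsmul_mem_Tor hh ?_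
      refine (AddSubgroup.add_mem_cancel_right _ ?_).1 hmem
      refine AddSubgroup.sum_mem _ fun j hj => ?_
      simp only [Finset.mem_Ioo] at hj
      exact AddSubgroup.nsmul_mem _ (htor j (by omega) hj.2).1 _
    · unfold bdiff
      refine tendsto_finsetSum _ fun j hj => ?_
      simp only [Finset.mem_Ioo] at hj
      refine Tendsto.const_smul ?_ _
      rcases Nat.lt_or_ge (D + 1 + 1) j with hlt | hge
      · rw [show (fun n => a n j) = fun _ => α j from
          funext fun n => (htor j (by omega) hj.2).2 n]
        exact tendsto_const_nhds
      · have : j = D + 1 + 1 := by omega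
        subst this; exact hlim

lemma cavg_periodic (w : ℕ → ℂ) (hw : ∀ i, ‖w i‖ ≤ 1) (P : ℕ) (hP : 0 < P)
    (hper : ∀ i, w (i + P) = w i) :
    ∃ L, ∀ M : ℕ → ℕ, Tendsto M atTop atTop → Tendsto (fun n => cavg (M n) w) atTop (𝓝 L) := by
  have hPc : (P : ℂ) ≠ 0 := by exact_mod_cast hP.ne'
  have hsum : ∀ i, ∑ h ∈ Finset.range P, w (i + h) = ∑ h ∈ Finset.range P, w h := by
    intro i
    induction i with
    | zero => simp
    | succ i ih =>
      rw [← ih]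
      have h1 := Finset.sum_range_succ (fun h => w (i + h)) P
      have h2 := Finset.sum_range_succ' (fun h => w (i + h)) P
      rw [h1] at h2
      simp only [hper, add_zero] at h2
      have h3 := add_right_cancel h2
      rw [h3]
      exact Finset.sum_congr rfl fun h _ => by congr 1; ring
  refine ⟨(P:ℂ)⁻¹ * ∑ h ∈ Finset.range P, w h, fun M hM => ?_⟩
  have h1 : Tendsto (fun n => (P:ℂ)⁻¹ * ∑ h ∈ Finset.range P,
        (cavg (M n) (fun i => w (i + h)) - cavg (M n) w)) atTop (𝓝 ((P:ℂ)⁻¹ *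
          ∑ h ∈ Finset.range P, 0)) :=
      (tendsto_finsetSum _ fun h _ => cavg_shift hM (fun _ => w) (fun _ => hw) h).const_mul _
  simp only [Finset.sum_const_zero, mul_zero] at h1
  have h2 := (tendsto_const_nhds (x := (P:ℂ)⁻¹ * ∑ h ∈ Finset.range P, w h)).sub h1
  rw [sub_zero] at h2
  refine h2.congr' ?_
  filter_upwards [hM.eventually_gt_atTop 0] with n hn
  have hMn : (M n : ℂ) ≠ 0 := by exact_mod_cast hn.ne'
  rw [Finset.sum_sub_distrib, Finset.sum_const, Finset.card_range,
      nsmul_eq_mul, mul_sub, inv_mul_cancel_left₀ hPc, ← cavg_sum]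
  simp only [hsum]
  have : cavg (M n) (fun _ => ∑ h ∈ Finset.range P, w h) = ∑ h ∈ Finset.range P, w h := by
    simp [cavg, inv_mul_cancel_left₀ hMn]
  rw [this]; ring

lemma weyl (J : ℕ) (α : ℕ → AC) : ∃ L : ℂ, ∀ (M : ℕ → ℕ) (a : ℕ → ℕ → AC),
    Tendsto M atTop atTop → (∀ j, Tendsto (fun n => a n j) atTop (𝓝 (α j))) →
    (∀ j, α j ∈ Tor → ∀ n, a n j = α j) →
    Tendsto (fun n => cavg (M n) (fun i => ee (bpoly (J + 1) (a n) i))) atTop (𝓝 L) := by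
  by_cases hA : ∀ j ∈ Finset.Ioo 0 (J + 1), α j ∈ Tor
  · obtain ⟨q, hq, hq'⟩ := common_order _ α hA
    obtain ⟨L, hL⟩ := cavg_periodic (fun i => ee (bpoly (J + 1) α i)) (fun i => (ee_norm _).le)
      (q * (J + 1).factorial) (Nat.mul_pos hq (Nat.factorial_pos _)) (by
        intro i
        rw [bpoly_shift]
        have : bpoly (J + 1) (bdiff (J + 1) (q * (J + 1).factorial) α) i = 0 := by
          unfold bpoly bdiff
          refine Finset.sum_eq_zero fun l _ => ?_
          rw [Finset.sum_eq_zero, smul_zero]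
          intro j hj
          simp only [Finset.mem_Ioo] at hj
          exact choose_smul_zero (by omega) (by omega) (hq' j (by simp; omega))
        rw [this, add_zero])
    refine ⟨L, fun M a hM hlim htor => ?_⟩
    have h1 : Tendsto (fun n => ee (a n 0 - α 0)) atTop (𝓝 (ee 0)) := by
      refine (ee_cont.tendsto _).comp ?_
      simpa using (hlim 0).sub_const (α 0)
    rw [ee_zero] at h1
    have h2 := h1.mul (hL M hM)
    rw [one_mul] at h2
    refine h2.congr fun n => ?_
    rw [← cavg_mul_left]
    congr 1; funext i
    rw [← ee_add]
    congr 1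
    unfold bpoly
    rw [Finset.sum_range_succ', Finset.sum_range_succ']
    have hs : ∑ j ∈ Finset.range J, i.choose (j + 1) • a n (j + 1)
        = ∑ j ∈ Finset.range J, i.choose (j + 1) • α (j + 1) :=
      Finset.sum_congr rfl fun j hj => by
        rw [htor (j + 1) (hA _ (by simp at hj ⊢; omega)) n]
    rw [hs]
    simp only [Nat.choose_zero_right, one_smul]
    abel
  · push Not at hA
    obtain ⟨j0, hj0, hj0'⟩ := hA
    classical
    obtain ⟨D, hD, hmax⟩ := Finset.exists_max_image
      ((Finset.Ioo 0 (J + 1)).filter fun j => α j ∉ Tor) id ⟨j0, by simp only [Finset.mem_filter]; exact ⟨hj0, hj0'⟩⟩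
    simp only [Finset.mem_filter, Finset.mem_Ioo, id] at hD hmax
    obtain ⟨D, rfl⟩ : ∃ k, D = k + 1 := ⟨D - 1, by omega⟩
    refine ⟨0, fun M a hM hlim htor => equi hM (J + 1) D a α hD.1.2 ?_ hD.2 (hlim _)⟩
    intro j hj hjJ
    have : α j ∈ Tor := by
      by_contra hc
      have := hmax j ⟨⟨by omega, hjJ⟩, hc⟩
      omega
    exact ⟨this, htor j this⟩

lemma hamel : ∃ (ι : Type) (b : Module.Basis ι ℚ ℝ) (i0 : ι), b i0 = 1 := by
  have hs : LinearIndepOn ℚ id ({1} : Set ℝ) := LinearIndepOn.singleton one_ne_zero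
  refine ⟨_, Module.Basis.extend hs, ⟨1, ?_⟩, ?_⟩
  · exact hs.subset_extend (Set.subset_univ _) rfl
  · rw [Module.Basis.extend_apply_self]

lemma functionals : ∃ ℓ : ℕ → ℝ →ₗ[ℚ] ℝ, (∀ n, ℓ n 1 = 1) ∧
    (∀ X, Tendsto (fun n => ℓ n X) atTop (𝓝 X)) ∧
    ∀ X, ∃ D : ℕ, 0 < D ∧ ∀ n : ℕ, 0 < n → ∃ z : ℤ, ((D * n : ℕ) : ℝ) * ℓ n X = z := by
  classical
  obtain ⟨ι, b, i0, hb⟩ := hamel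
  set v : ℕ → ι → ℝ := fun n j => if j = i0 then 1 else (round ((n:ℝ) * b j) : ℝ) / n with hv
  have hvint : ∀ n : ℕ, 0 < n → ∀ j, ∃ z : ℤ, (n : ℝ) * v n j = z := by
    intro n hn j
    have hn' : (n:ℝ) ≠ 0 := by exact_mod_cast hn.ne'
    simp only [hv]
    split_ifs
    · exact ⟨n, by simp⟩
    · exact ⟨round ((n:ℝ) * b j), by field_simp⟩
  have hvlim : ∀ j, Tendsto (fun n => v n j) atTop (𝓝 (b j)) := by
    intro j
    by_cases hj : j = i0
    · subst hj; simp [hv, hb]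
    simp only [hv, if_neg hj]
    rw [tendsto_iff_norm_sub_tendsto_zero]
    have h1 : Tendsto (fun n : ℕ => (1 / 2 : ℝ) * ((n : ℕ) : ℝ)⁻¹) atTop (𝓝 0) := by
      simpa using (tendsto_inv_atTop_zero.comp tendsto_natCast_atTop_atTop).const_mul (1 / 2 : ℝ)
    refine squeeze_zero' (Eventually.of_forall fun _ => norm_nonneg _) ?_ h1
    filter_upwards [eventually_gt_atTop 0] with n hn
    have hn' : (0:ℝ) < n := by exact_mod_cast hn
    have e : (round ((n:ℝ) * b j) : ℝ) / n - b j = ((round ((n:ℝ) * b j) : ℝ) - n * b j) * (n:ℝ)⁻¹ := by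
      field_simp
    rw [e, norm_mul, Real.norm_eq_abs, Real.norm_eq_abs, abs_of_pos (inv_pos.2 hn'), abs_sub_comm]
    gcongr
    exact abs_sub_round _
  have hform : ∀ n X, b.constr ℚ (v n) X = ∑ j ∈ (b.repr X).support, ((b.repr X j : ℚ) : ℝ) * v n j := by
    intro n X
    rw [Module.Basis.constr_apply, Finsupp.sum]
    exact Finset.sum_congr rfl fun j _ => by rw [Rat.smul_def]
  refine ⟨fun n => b.constr ℚ (v n), fun n => ?_, fun X => ?_, fun X => ?_⟩
  · conv_lhs => rw [← hb, Module.Basis.constr_basis]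
    simp [hv]
  · simp only [hform]
    have hX : X = ∑ j ∈ (b.repr X).support, ((b.repr X j : ℚ) : ℝ) * b j := by
      conv_lhs => rw [← b.linearCombination_repr X, Finsupp.linearCombination_apply, Finsupp.sum]
      exact Finset.sum_congr rfl fun j _ => by rw [Rat.smul_def]
    conv => 
      congr
      · skip
      · skip
      · rw [hX]
    exact tendsto_finsetSum _ fun j _ => (hvlim j).const_mul _
  · refine ⟨∏ j ∈ (b.repr X).support, (b.repr X j).den, Finset.prod_pos fun j _ => (b.repr X j).pos,
      fun n hn => ?_⟩
    choose z hz using hvint n hn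
    choose! t ht using fun (j : ι) (hj : j ∈ (b.repr X).support) =>
      Finset.dvd_prod_of_mem (fun j => (b.repr X j).den) hj
    refine ⟨∑ j ∈ (b.repr X).support, (t j : ℤ) * (b.repr X j).num * z j, ?_⟩
    rw [hform, Finset.mul_sum]
    push_cast
    refine Finset.sum_congr rfl fun j hj => ?_
    have h1 : ((∏ j ∈ (b.repr X).support, (b.repr X j).den : ℕ) : ℝ) = (b.repr X j).den * t j := by
      exact_mod_cast ht j hj
    have h2 : ((b.repr X j : ℚ) : ℝ) * (b.repr X j).den = (b.repr X j).num := by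
      exact_mod_cast Rat.mul_den_eq_num (b.repr X j)
    rw [← Nat.cast_prod, h1, ← hz j, ← h2]
    ring

lemma approx {d : ℕ} (x : Torus d) : ∃ c0 : ℕ, 0 < c0 ∧ ∃ xs : ℕ → Torus d,
    (∀ n, 0 < n → ∀ i, (c0 * n) • xs n i = 0) ∧
    (∀ k : Fin d → ℤ, Tendsto (fun n => ∑ i, k i • xs n i) atTop (𝓝 (∑ i, k i • x i))) ∧
    ∀ k : Fin d → ℤ, ∑ i, k i • x i ∈ Tor → ∀ n, ∑ i, k i • xs n i = ∑ i, k i • x i := by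
  obtain ⟨ℓ, h1, hlim, hden⟩ := functionals
  choose X hX using fun i => QuotientAddGroup.mk_surjective (x i)
  choose D hD hD' using hden
  have hX' : ∀ i, x i = ((X i : ℝ) : AC) := fun i => (hX i).symm
  have hk : ∀ (k : Fin d → ℤ) (Y : Fin d → ℝ), ∑ i, k i • ((Y i : ℝ) : AC)
      = ((∑ i, k i • Y i : ℝ) : AC) := by
    intro k Y
    have := map_sum (QuotientAddGroup.mk' (AddSubgroup.zmultiples (1:ℝ))) (fun i => k i • Y i)
      Finset.univ
    simp only [map_zsmul] at this
    exact this.symm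
  refine ⟨∏ i, D (X i), Finset.prod_pos fun i _ => hD _, fun n i => ((ℓ n (X i) : ℝ) : AC),
    ?_, ?_, ?_⟩
  · intro n hn i
    obtain ⟨z, hz⟩ := hD' (X i) n hn
    obtain ⟨t, ht⟩ := Finset.dvd_prod_of_mem (fun i => D (X i)) (Finset.mem_univ i)
    have : (D (X i) * n) • ((ℓ n (X i) : ℝ) : AC) = 0 := by
      rw [← AddCircle.coe_nsmul, AddCircle.coe_eq_zero_iff]
      exact ⟨z, by rw [nsmul_eq_mul, hz]; simp⟩
    rw [ht, show D (X i) * t * n = t * (D (X i) * n) by ring, mul_smul, this, smul_zero]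
  · intro k
    simp only [hX', hk]
    refine ((AddCircle.continuous_mk' (1:ℝ)).tendsto _).comp ?_
    exact tendsto_finsetSum _ fun i _ => (hlim (X i)).const_smul _
  · intro k hkt n
    simp only [hX', hk] at hkt ⊢
    obtain ⟨q, hq, hq'⟩ := mem_Tor.1 hkt
    rw [← AddCircle.coe_nsmul, AddCircle.coe_eq_zero_iff] at hq'
    obtain ⟨m, hm⟩ := hq'
    set Y := ∑ i, k i • X i with hY
    have e1 : ∑ i, k i • ℓ n (X i) = ℓ n Y := by rw [hY, map_sum]; simp only [map_zsmul]
    have hq0 : (q : ℝ) ≠ 0 := by exact_mod_cast hq.ne'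
    have e2 : Y = ((m : ℚ) / q) • (1:ℝ) := by
      rw [Rat.smul_def]
      simp only [zsmul_eq_mul, nsmul_eq_mul, mul_one] at hm
      push_cast
      rw [hm]; field_simp
    rw [e1, e2, map_smul, h1]

lemma toralAuto_mul {d : ℕ} (A B : Matrix (Fin d) (Fin d) ℤ) (x : Torus d) :
    toralAuto (A * B) x = toralAuto A (toralAuto B x) := by
  funext i
  simp only [toralAuto, Matrix.mul_apply, Finset.sum_smul, Finset.smul_sum, mul_smul]
  exact Finset.sum_comm

lemma toralAuto_one {d : ℕ} (x : Torus d) :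
    toralAuto (1 : Matrix (Fin d) (Fin d) ℤ) x = x := by
  funext i
  simp [toralAuto, Matrix.one_apply, ite_smul]

lemma toralAuto_iter {d : ℕ} (U : Matrix (Fin d) (Fin d) ℤ) (i : ℕ) (x : Torus d) :
    (toralAuto U)^[i] x = toralAuto (U ^ i) x := by
  induction i with
  | zero => simp [toralAuto_one]
  | succ i ih => rw [Function.iterate_succ_apply', ih, pow_succ', toralAuto_mul]

lemma toralAuto_cont {d : ℕ} (U : Matrix (Fin d) (Fin d) ℤ) : Continuous (toralAuto U) := by
  unfold toralAuto
  refine continuous_pi fun i => continuous_finsetSum _ fun j _ => ?_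
  exact (continuous_zsmul _).comp (continuous_apply j)

lemma pow_expand {d : ℕ} (U : Matrix (Fin d) (Fin d) ℤ) (hU : (U - 1) ^ d = 0) (i : ℕ) :
    U ^ i = ∑ m ∈ Finset.range (d + 1), i.choose m • (U - 1) ^ m := by
  have h1 : U ^ i = ∑ m ∈ Finset.range (i + 1), i.choose m • (U - 1) ^ m := by
    conv_lhs => rw [← sub_add_cancel U 1]
    rw [(Commute.one_right (U - 1)).add_pow]
    refine Finset.sum_congr rfl fun m _ => ?_
    rw [one_pow, mul_one, nsmul_eq_mul, (Nat.cast_commute _ _).eq]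
  have h2 : ∀ K L, i ≤ K ∨ d ≤ K → K ≤ L → 
      ∑ m ∈ Finset.range (L + 1), i.choose m • (U - 1) ^ m
      = ∑ m ∈ Finset.range (K + 1), i.choose m • (U - 1) ^ m := by
    intro K L hK hKL
    symm
    refine Finset.sum_subset (Finset.range_mono (by omega)) fun m _ hm => ?_
    simp only [Finset.mem_range, not_lt] at hm
    rcases hK with h | h
    · rw [Nat.choose_eq_zero_of_lt (by omega), zero_smul]
    · rw [pow_eq_zero_of_le (by omega) hU, smul_zero]
  rw [h1, ← h2 i (max i d) (Or.inl le_rfl) (le_max_left _ _),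
    ← h2 d (max i d) (Or.inr le_rfl) (le_max_right _ _)]

lemma mFourier_eq {d : ℕ} (k : Fin d → ℤ) (x : Torus d) :
    UnitAddTorus.mFourier k x = ee (∑ i, k i • x i) := by
  have h : ∀ s : Finset (Fin d), ∏ i ∈ s, (fourier (k i) (x i) : ℂ) = ee (∑ i ∈ s, k i • x i) := by
    classical
    intro s
    induction s using Finset.induction_on with
    | empty => simp [ee_zero]
    | insert a s ha ih => 
      rw [Finset.prod_insert ha, Finset.sum_insert ha, ee_add, ih]; rfl
  exact h Finset.univ

/-- coefficients along the orbit -/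
lemma mFourier_orbit {d : ℕ} (U : Matrix (Fin d) (Fin d) ℤ) (hU : (U - 1) ^ d = 0)
    (k : Fin d → ℤ) (x : Torus d) (i : ℕ) :
    UnitAddTorus.mFourier k ((toralAuto U)^[i] x)
      = ee (bpoly (d + 1) (fun m => ∑ j, (Matrix.vecMul k ((U - 1) ^ m)) j • x j) i) := by
  rw [mFourier_eq, toralAuto_iter, pow_expand U hU]
  congr 1
  unfold bpoly toralAuto
  have h1 : ∀ A : Matrix (Fin d) (Fin d) ℤ, ∑ i, k i • ∑ j, A i j • x j
      = ∑ j, (Matrix.vecMul k A) j • x j := by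
    intro A
    simp only [Matrix.vecMul, dotProduct, Finset.sum_smul, Finset.smul_sum, mul_smul]
    exact Finset.sum_comm
  rw [h1]
  simp only [Matrix.vecMul_sum, Finset.sum_apply, Matrix.vecMul_smul, Pi.smul_apply,
    Finset.sum_smul, Finset.smul_sum, smul_assoc]
  exact Finset.sum_comm

lemma periodic_pt {d : ℕ} (U : Matrix (Fin d) (Fin d) ℤ) (hU : (U - 1) ^ d = 0)
    (q : ℕ) (x : Torus d) (hx : ∀ i, q • x i = 0) :
    (toralAuto U)^[q * d.factorial] x = x := by
  rw [toralAuto_iter, pow_expand U hU]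
  have h : ∀ (s : Finset ℕ) (f : ℕ → Matrix (Fin d) (Fin d) ℤ), 
      toralAuto (∑ m ∈ s, f m) x = ∑ m ∈ s, toralAuto (f m) x := by
    intro s f
    funext i
    simp only [toralAuto, Matrix.sum_apply, Finset.sum_smul, Finset.sum_apply]
    exact Finset.sum_comm
  rw [h, Finset.sum_range_succ', Finset.sum_eq_zero]
  · simp [toralAuto_one]
  intro m hm
  simp only [Finset.mem_range] at hm
  funext i
  simp only [toralAuto, Matrix.smul_apply, Pi.zero_apply]
  refine Finset.sum_eq_zero fun j _ => ?_
  rw [smul_assoc, smul_comm, choose_smul_zero (by omega) (by omega) (hx j), smul_zero]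

lemma generic {d : ℕ} (U : Matrix (Fin d) (Fin d) ℤ) (hU : (U - 1) ^ d = 0)
    (μ : Measure (Torus d)) [IsProbabilityMeasure μ] (herg : Ergodic (toralAuto U) μ)
    (k : Fin d → ℤ) : ∀ᵐ x ∂μ, Tendsto (fun n => cavg n
      (fun i => UnitAddTorus.mFourier k ((toralAuto U)^[i] x))) atTop
      (𝓝 (∫ z, UnitAddTorus.mFourier k z ∂μ)) := by
  set χ : Torus d → ℂ := fun x => UnitAddTorus.mFourier k x with hχ
  have hχc : Continuous χ := (UnitAddTorus.mFourier k).continuous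
  have hχ1 : ∀ x, ‖χ x‖ ≤ 1 := fun x => by
    simp only [hχ]; rw [mFourier_eq, ee_norm]
  have hcont : ∀ i, Continuous fun x => χ ((toralAuto U)^[i] x) := fun i =>
    hχc.comp ((toralAuto_cont U).iterate i)
  have hA : ∀ n, Continuous fun x => cavg n (fun i => χ ((toralAuto U)^[i] x)) := by
    intro n
    unfold cavg
    exact continuous_const.mul (continuous_finsetSum _ fun i _ => hcont i)
  have hex : ∀ x, ∃ L, Tendsto (fun n => cavg n (fun i => χ ((toralAuto U)^[i] x))) atTop (𝓝 L) := by
    intro x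
    obtain ⟨L, hL⟩ := weyl d (fun m => ∑ j, (Matrix.vecMul k ((U - 1) ^ m)) j • x j)
    refine ⟨L, (hL id (fun _ => _) tendsto_id (fun j => tendsto_const_nhds)
      (fun _ _ _ => rfl)).congr fun n => ?_⟩
    simp only [hχ, mFourier_orbit U hU]
    rfl
  choose g hg using hex
  have hgm : Measurable g := measurable_of_tendsto_metrizable (fun n => (hA n).measurable)
    (tendsto_pi_nhds.2 hg)
  have hinv : g ∘ toralAuto U = g := by
    funext x
    have h1 := cavg_shift tendsto_id (fun _ i => χ ((toralAuto U)^[i] x)) (fun _ _ => hχ1 _) 1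
    have h2 := h1.add (hg x)
    simp only [id, sub_add_cancel, zero_add, Function.iterate_succ_apply] at h2
    exact tendsto_nhds_unique (hg (toralAuto U x)) h2
  obtain ⟨c, hc⟩ := herg.ae_eq_const_of_ae_eq_comp₀ hgm.nullMeasurable (by rw [hinv])
  have hintegral : ∀ n, 0 < n → ∫ x, cavg n (fun i => χ ((toralAuto U)^[i] x)) ∂μ = ∫ x, χ x ∂μ := by
    intro n hn
    have hn' : (n : ℂ) ≠ 0 := by exact_mod_cast hn.ne'
    unfold cavg
    rw [integral_const_mul, integral_finsetSum]
    · have : ∀ i, ∫ x, χ ((toralAuto U)^[i] x) ∂μ = ∫ x, χ x ∂μ := by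
        intro i
        have hmp := herg.toMeasurePreserving.iterate i
        conv_rhs => rw [← hmp.map_eq]
        rw [integral_map hmp.measurable.aemeasurable hχc.aestronglyMeasurable]
      simp [this, inv_mul_cancel_left₀ hn']
    · intro i _
      exact Integrable.of_bound (hcont i).aestronglyMeasurable 1 (ae_of_all _ fun x => hχ1 _)
  have hdc : Tendsto (fun n => ∫ x, cavg n (fun i => χ ((toralAuto U)^[i] x)) ∂μ) atTop
      (𝓝 (∫ x, g x ∂μ)) := 
    tendsto_integral_of_dominated_convergence (fun _ => 1) (fun n => (hA n).aestronglyMeasurable)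
      (integrable_const _) (fun n => ae_of_all _ fun x => cavg_norm_le _ _ fun i => hχ1 _)
      (ae_of_all _ hg)
  have hlim : Tendsto (fun n => ∫ x, cavg n (fun i => χ ((toralAuto U)^[i] x)) ∂μ) atTop
      (𝓝 (∫ x, χ x ∂μ)) := by
    apply tendsto_const_nhds.congr'
    filter_upwards [eventually_gt_atTop 0] with n hn
    exact (hintegral n hn).symm
  have hgc : ∫ x, g x ∂μ = c := by
    rw [integral_congr_ae hc]; simp
  have hfin : c = ∫ x, χ x ∂μ := by rw [← hgc]; exact tendsto_nhds_unique hdc hlim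
  filter_upwards [hc] with x hx
  have := hg x
  rw [hx] at this
  simp only [Function.const_apply, hfin] at this
  exact this

lemma cavg_weak {d : ℕ} (μ : Measure (Torus d)) [IsProbabilityMeasure μ]
    (M : ℕ → ℕ) (y : ℕ → ℕ → Torus d)
    (H : ∀ k : Fin d → ℤ, Tendsto (fun n => cavg (M n)
      (fun i => UnitAddTorus.mFourier k (y n i))) atTop (𝓝 (∫ z, UnitAddTorus.mFourier k z ∂μ)))
    (F : C(Torus d, ℂ)) :
    Tendsto (fun n => cavg (M n) (fun i => F (y n i))) atTop (𝓝 (∫ z, F z ∂μ)) := by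
  have hI : ∀ G : C(Torus d, ℂ), Integrable (fun z => G z) μ := fun G =>
    Integrable.of_bound G.continuous.aestronglyMeasurable ‖G‖
      (ae_of_all _ fun x => G.norm_coe_le_norm x)
  have hspan : ∀ G ∈ Submodule.span ℂ (Set.range (UnitAddTorus.mFourier (d := Fin d))),
      Tendsto (fun n => cavg (M n) (fun i => G (y n i))) atTop (𝓝 (∫ z, G z ∂μ)) := by
    intro G hG
    induction hG using Submodule.span_induction with
    | mem G hG => obtain ⟨k, rfl⟩ := hG; exact H k
    | zero => simp [cavg]
    | add G K _ _ hG hK =>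
      have := hG.add hK
      simp only [ContinuousMap.add_apply]
      rw [integral_add (hI G) (hI K)]
      refine this.congr fun n => ?_
      simp [cavg, Finset.sum_add_distrib, mul_add]
    | smul c G _ hG =>
      have := hG.const_mul c
      simp only [ContinuousMap.smul_apply, smul_eq_mul]
      rw [integral_const_mul]
      refine this.congr fun n => ?_
      rw [cavg_mul_left]
  have hF : F ∈ closure (Submodule.span ℂ (Set.range (UnitAddTorus.mFourier (d := Fin d))) :
      Set C(Torus d, ℂ)) := by
    have h := UnitAddTorus.span_mFourier_closure_eq_top (d := Fin d)
    rw [← Submodule.topologicalClosure_coe, h]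
    trivial
  rw [Metric.tendsto_atTop]
  intro ε hε
  obtain ⟨G, hG, hFG⟩ := Metric.mem_closure_iff.1 hF (ε / 3) (by positivity)
  obtain ⟨N, hN⟩ := Metric.tendsto_atTop.1 (hspan G hG) (ε / 3) (by positivity)
  refine ⟨N, fun n hn => ?_⟩
  have h1 := hN n hn
  rw [dist_eq_norm] at hFG
  have hpt : ∀ x, ‖F x - G x‖ ≤ ‖F - G‖ := fun x => (F - G).norm_coe_le_norm x
  have h2 : dist (∫ z, G z ∂μ) (∫ z, F z ∂μ) < ε / 3 := by
    rw [dist_comm, dist_eq_norm, ← integral_sub (hI F) (hI G)]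
    refine lt_of_le_of_lt ?_ hFG
    have := norm_integral_le_of_norm_le_const (μ := μ) (ae_of_all _ hpt)
    simpa using this
  have h3 : dist (cavg (M n) (fun i => F (y n i))) (cavg (M n) (fun i => G (y n i))) < ε / 3 := by
    refine lt_of_le_of_lt ?_ hFG
    rw [dist_eq_norm]
    unfold cavg
    rw [← mul_sub, ← Finset.sum_sub_distrib, norm_mul, norm_inv, Complex.norm_natCast]
    calc _ ≤ ((M n : ℕ) : ℝ)⁻¹ * ((M n : ℕ) * ‖F - G‖) := by
          gcongr
          refine (norm_sum_le _ _).trans ?_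
          refine (Finset.sum_le_sum fun i _ => hpt (y n i)).trans ?_
          simp
      _ = (((M n : ℕ) : ℝ)⁻¹ * (M n : ℕ)) * ‖F - G‖ := by ring
      _ ≤ 1 * ‖F - G‖ := by gcongr; exact inv_mul_le_one
      _ = _ := one_mul _
  calc _ ≤ dist (cavg (M n) (fun i => F (y n i))) (cavg (M n) (fun i => G (y n i)))
        + dist (cavg (M n) (fun i => G (y n i))) (∫ z, G z ∂μ)
        + dist (∫ z, G z ∂μ) (∫ z, F z ∂μ) := dist_triangle4 _ _ _ _
    _ < ε := by linarith

theorem ergodic_measure_approx_by_periodic_unipotent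
    {d : ℕ} (hd : 0 < d) (U : Matrix (Fin d) (Fin d) ℤ)
    (hUdet : IsUnit U.det) (hUuni : (U - 1) ^ d = 0)
    (μ : Measure (Torus d)) (hμp : IsProbabilityMeasure μ)
    (herg : Ergodic (toralAuto U) μ) :
    ∃ c : ℕ, 0 < c ∧ ∃ xs : ℕ → Torus d,
      (∀ n : ℕ, 0 < n → (toralAuto U)^[c * n] (xs n) = xs n) ∧
      ∀ f : C(Torus d, ℝ),
        Tendsto (fun n : ℕ =>
            ((c * n : ℕ) : ℝ)⁻¹ * ∑ i ∈ Finset.range (c * n), f ((toralAuto U)^[i] (xs n)))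
          atTop (nhds (∫ z, f z ∂μ)) := by
  obtain ⟨x, hx⟩ := (ae_all_iff.2 fun k => generic U hUuni μ herg k).exists
  obtain ⟨c0, hc0, xs, hper, hlim, htor⟩ := approx x
  have hc : 0 < c0 * d.factorial := Nat.mul_pos hc0 d.factorial_pos
  refine ⟨c0 * d.factorial, hc, xs, fun n hn => ?_, fun f => ?_⟩
  · rw [show c0 * d.factorial * n = (c0 * n) * d.factorial by ring]
    exact periodic_pt U hUuni _ _ (hper n hn)
  have hM : Tendsto (fun n : ℕ => c0 * d.factorial * n) atTop atTop :=
    tendsto_id.const_mul_atTop' hc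
  have H := cavg_weak μ (fun n => c0 * d.factorial * n) (fun n i => (toralAuto U)^[i] (xs n)) (by
    intro k
    obtain ⟨L, hL⟩ := weyl d (fun m => ∑ j, (Matrix.vecMul k ((U - 1) ^ m)) j • x j)
    have h1 := hL id (fun _ => _) tendsto_id (fun j => tendsto_const_nhds) (fun _ _ _ => rfl)
    have h2 := hL _ (fun n m => ∑ j, (Matrix.vecMul k ((U - 1) ^ m)) j • xs n j) hM
      (fun j => hlim _) (fun j => htor _)
    have h3 := hx k
    simp only [mFourier_orbit U hUuni] at h3 ⊢
    rw [tendsto_nhds_unique h3 h1]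
    exact h2) ⟨fun z => (f z : ℂ), Complex.continuous_ofReal.comp f.continuous⟩
  simp only [ContinuousMap.coe_mk] at H
  rw [integral_complex_ofReal] at H
  have H2 := (Complex.continuous_re.tendsto _).comp H
  rw [Complex.ofReal_re] at H2
  refine H2.congr fun n => ?_
  simp only [Function.comp, cavg]
  rw [← Complex.ofReal_sum, ← Complex.ofReal_natCast, ← Complex.ofReal_inv, ← Complex.ofReal_mul,
    Complex.ofReal_re]
end

section
/- Let (X,T) be a dynamical system, let (z_n)_{n=1}^∞ be a sequence in X, and let (q_n)_{n=1}^∞ be a sequence in ℕ with q_n → ∞. Suppose the empirical measures m_{T, z_n, q_n} converge weak-* to a T-invariant Borel probability measure μ. Let K ∈ ℕ and set p_n = ⌊q_n / K⌋. If the restriction of T^K to the support of μ is uniquely ergodic (so that μ is its unique invariant Borel probability measure), then m_{T^K, z_n, p_n} → μ in the weak-* topology. -/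
open MeasureTheory Topology Filter

/-- The support of a measure. -/
def msupport {X : Type*} [TopologicalSpace X] [MeasurableSpace X] (μ : Measure X) : Set X :=
  {x : X | ∀ O : Set X, IsOpen O → x ∈ O → 0 < μ O}

/-- The empirical measure as a bundled probability measure. -/
lemma exists_empirical {X : Type*} [TopologicalSpace X] [CompactSpace X]
    [TopologicalSpace.MetrizableSpace X] [MeasurableSpace X] [BorelSpace X]
    (S : X → X) (z : X) (p : ℕ) :
    ∃ m : ProbabilityMeasure X, 0 < p → ∀ f : C(X, ℝ),
      ∫ x, f x ∂(m : Measure X) = (p : ℝ)⁻¹ * ∑ i ∈ Finset.range p, f (S^[i] z) := by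
  rcases Nat.eq_zero_or_pos p with hp | hp
  · exact ⟨⟨Measure.dirac z, inferInstance⟩, fun h => absurd hp h.ne'⟩
  · have hp0 : (p : ENNReal) ≠ 0 := by exact_mod_cast hp.ne'
    refine ⟨⟨(p : ENNReal)⁻¹ • ∑ i ∈ Finset.range p, Measure.dirac (S^[i] z), ⟨?_⟩⟩, fun _ f => ?_⟩
    · simp [Measure.finsetSum_apply, ENNReal.inv_mul_cancel hp0 (ENNReal.natCast_ne_top p)]
    · simp only [ProbabilityMeasure.coe_mk]
      rw [integral_smul_measure, integral_finsetSum_measure]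
      · simp [integral_dirac]
      · intro i _
        exact f.continuous.integrable_of_hasCompactSupport
          (HasCompactSupport.of_compactSpace _)

/-- Averages of a nonnegative function along `T^K` are controlled by those along `T`. -/
lemma power_average_le {X : Type*} (T : X → X) (z : X) (q K : ℕ) (hK : 0 < K)
    (hp : 0 < q / K) (f : X → ℝ) (hf : ∀ x, 0 ≤ f x) :
    ((q / K : ℕ) : ℝ)⁻¹ * ∑ i ∈ Finset.range (q / K), f ((T^[K])^[i] z) ≤
      (2 * K) * ((q : ℝ)⁻¹ * ∑ i ∈ Finset.range q, f (T^[i] z)) := by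
  have h1 : ∑ i ∈ Finset.range (q / K), f ((T^[K])^[i] z) ≤ ∑ i ∈ Finset.range q, f (T^[i] z) := by
    have h2 : ∑ i ∈ Finset.range (q / K), f ((T^[K])^[i] z) =
        ∑ j ∈ (Finset.range (q / K)).image (fun i => K * i), f (T^[j] z) := by
      rw [Finset.sum_image]
      · simp [Function.iterate_mul]
      · intro a _ b _ hab
        exact Nat.eq_of_mul_eq_mul_left hK hab
    rw [h2]
    apply Finset.sum_le_sum_of_subset_of_nonneg
    · intro j hj
      simp only [Finset.mem_image, Finset.mem_range] at hj ⊢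
      obtain ⟨i, hi, rfl⟩ := hj
      calc K * i < K * (q / K) := Nat.mul_lt_mul_of_pos_left hi hK
        _ ≤ q := Nat.mul_div_le q K
    · intro i _ _
      exact hf _
  have hS : 0 ≤ ∑ i ∈ Finset.range q, f (T^[i] z) := Finset.sum_nonneg fun i _ => hf _
  have hq : 0 < q := lt_of_lt_of_le hp (Nat.div_le_self q K)
  have hle : q ≤ 2 * K * (q / K) := by
    have h3 := Nat.lt_mul_div_succ q hK
    nlinarith
  have hle' : (q : ℝ) ≤ 2 * K * ((q / K : ℕ) : ℝ) := by exact_mod_cast hle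
  have hp' : (0 : ℝ) < ((q / K : ℕ) : ℝ) := by exact_mod_cast hp
  have hq' : (0 : ℝ) < (q : ℝ) := by exact_mod_cast hq
  have hc : ((q / K : ℕ) : ℝ)⁻¹ ≤ 2 * K * (q : ℝ)⁻¹ := by
    rw [← div_eq_mul_inv, inv_eq_one_div, div_le_div_iff₀ hp' hq']
    linarith
  calc _ ≤ ((q / K : ℕ) : ℝ)⁻¹ * ∑ i ∈ Finset.range q, f (T^[i] z) :=
        mul_le_mul_of_nonneg_left h1 (inv_nonneg.2 hp'.le)
    _ ≤ (2 * K * (q : ℝ)⁻¹) * ∑ i ∈ Finset.range q, f (T^[i] z) :=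
        mul_le_mul_of_nonneg_right hc hS
    _ = _ := by ring

/-- Domination of integrals gives inclusion of supports. -/
lemma msupport_subset_of_le {X : Type*} [TopologicalSpace X] [CompactSpace X]
    [TopologicalSpace.MetrizableSpace X] [MeasurableSpace X] [BorelSpace X]
    (μ ν : Measure X) [IsProbabilityMeasure μ] [IsProbabilityMeasure ν] (C : ℝ)
    (h : ∀ f : C(X, ℝ), (∀ x, 0 ≤ f x) → ∫ x, f x ∂ν ≤ C * ∫ x, f x ∂μ) :
    msupport ν ⊆ msupport μ := by
  let _ := TopologicalSpace.metrizableSpaceMetric X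
  intro x hx O hO hxO
  by_contra hμ
  have hμ0 : μ O = 0 := by simpa using hμ
  obtain ⟨f, hf0, hf1, hf⟩ := exists_continuous_zero_one_of_isClosed
    (isClosed_compl_iff.2 hO) (isClosed_singleton (x := x))
    (Set.disjoint_singleton_right.2 (by simpa using hxO))
  have hfμ : ∫ y, f y ∂μ = 0 := by
    apply integral_eq_zero_of_ae
    have : ∀ᵐ y ∂μ, y ∉ O := measure_eq_zero_iff_ae_notMem.1 hμ0
    filter_upwards [this] with y hy
    exact hf0 hy
  have hfν : ∫ y, f y ∂ν = 0 := by
    apply le_antisymm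
    · have := h f (fun y => (hf y).1)
      simpa [hfμ] using this
    · exact integral_nonneg fun y => (hf y).1
  rw [integral_eq_zero_iff_of_nonneg (fun y => (hf y).1)
    (f.continuous.integrable_of_hasCompactSupport (HasCompactSupport.of_compactSpace _))] at hfν
  have hpos := hx {y | f y ≠ 0} (isOpen_ne_fun f.continuous continuous_const) (by
    have : f x = 1 := hf1 rfl
    simp [this])
  have : ν {y | f y ≠ 0} = 0 := hfν
  exact absurd this (ne_of_gt hpos)

/-- If the empirical measures `m_{T,zₙ,qₙ}` converge to an invariant measure `μ` and the
restriction of `T^K` to `supp μ` is uniquely ergodic (with unique invariant measure `μ`),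
then the empirical measures `m_{T^K, zₙ, ⌊qₙ/K⌋}` also converge to `μ` (weak-* convergence
being tested against continuous functions). -/
theorem empirical_measures_of_power_converge
    {X : Type*} [TopologicalSpace X] [CompactSpace X] [TopologicalSpace.MetrizableSpace X]
    [MeasurableSpace X] [BorelSpace X]
    (T : X ≃ₜ X) (z : ℕ → X) (q : ℕ → ℕ) (hq : Tendsto q atTop atTop)
    (μ : Measure X) (hμp : IsProbabilityMeasure μ) (hμinv : Measure.map ⇑T μ = μ)
    (hconv : ∀ f : C(X, ℝ),
      Tendsto (fun n : ℕ =>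
          ((q n : ℕ) : ℝ)⁻¹ * ∑ i ∈ Finset.range (q n), f ((⇑T)^[i] (z n)))
        atTop (nhds (∫ x, f x ∂μ)))
    (K : ℕ) (hK : 0 < K)
    (huniq : ∀ ν : Measure X, IsProbabilityMeasure ν →
      Measure.map ((⇑T)^[K]) ν = ν → msupport ν ⊆ msupport μ → ν = μ) :
    ∀ f : C(X, ℝ),
      Tendsto (fun n : ℕ =>
          ((q n / K : ℕ) : ℝ)⁻¹ * ∑ i ∈ Finset.range (q n / K), f (((⇑T)^[K])^[i] (z n)))
        atTop (nhds (∫ x, f x ∂μ)) := by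
  let _ := TopologicalSpace.metrizableSpaceMetric X
  have hcont : Continuous ((⇑T)^[K]) := T.continuous.iterate K
  choose m hm using fun n => exists_empirical ((⇑T)^[K]) (z n) (q n / K)
  have hpt : Tendsto (fun n => q n / K) atTop atTop := (Nat.tendsto_div_const_atTop hK.ne').comp hq
  have hpos : ∀ᶠ n in atTop, 0 < q n / K := hpt.eventually_gt_atTop 0
  intro f
  rw [tendsto_iff_ultrafilter]
  intro U hU
  let ν : ProbabilityMeasure X := (U.map m).lim
  have hν : Tendsto m U (𝓝 ν) := (U.map m).le_nhds_lim
  have hlim : ∀ g : C(X, ℝ), Tendsto (fun n : ℕ =>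
      ((q n / K : ℕ) : ℝ)⁻¹ * ∑ i ∈ Finset.range (q n / K), g (((⇑T)^[K])^[i] (z n)))
        U (𝓝 (∫ x, g x ∂(ν : Measure X))) := by
    intro g
    have h1 := ProbabilityMeasure.tendsto_iff_forall_integral_tendsto.1 hν
      (BoundedContinuousFunction.mkOfCompact g)
    refine Tendsto.congr' ?_ h1
    filter_upwards [hU hpos] with n hn
    exact hm n hn g
  have hinv : Measure.map ((⇑T)^[K]) (ν : Measure X) = ν := by
    have : IsProbabilityMeasure (Measure.map ((⇑T)^[K]) (ν : Measure X)) :=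
      Measure.isProbabilityMeasure_map hcont.aemeasurable
    apply ext_of_forall_integral_eq_of_IsFiniteMeasure
    intro g
    rw [integral_map hcont.aemeasurable g.continuous.aestronglyMeasurable]
    have ha := hlim ⟨fun x => g ((⇑T)^[K] x), g.continuous.comp hcont⟩
    have hb := hlim ⟨g, g.continuous⟩
    have hd := ha.sub hb
    have hz : Tendsto (fun n : ℕ => ((q n / K : ℕ) : ℝ)⁻¹ * (2 * ‖g‖)) atTop (𝓝 0) := by
      have := (tendsto_inv_atTop_nhds_zero_nat (𝕜 := ℝ)).comp hpt
      simpa using this.mul_const (2 * ‖g‖)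
    refine sub_eq_zero.1 (tendsto_nhds_unique hd (squeeze_zero_norm (fun n => ?_) (hz.mono_left hU)))
    · simp only [ContinuousMap.coe_mk]
      rw [← mul_sub, ← Finset.sum_sub_distrib]
      have := Finset.sum_range_sub (fun i => g (((⇑T)^[K])^[i] (z n))) (q n / K)
      simp only [Function.iterate_succ_apply'] at this
      rw [this, norm_mul, Real.norm_of_nonneg (by positivity : (0 : ℝ) ≤ ((q n / K : ℕ) : ℝ)⁻¹)]
      apply mul_le_mul_of_nonneg_left _ (by positivity)
      calc _ ≤ ‖g (((⇑T)^[K])^[q n / K] (z n))‖ + ‖g (((⇑T)^[K])^[0] (z n))‖ := norm_sub_le _ _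
        _ ≤ ‖g‖ + ‖g‖ := add_le_add (g.norm_coe_le_norm _) (g.norm_coe_le_norm _)
        _ = 2 * ‖g‖ := by ring
  have hsupp : msupport (ν : Measure X) ⊆ msupport μ := by
    apply msupport_subset_of_le μ (ν : Measure X) (2 * K)
    intro g hg
    refine le_of_tendsto_of_tendsto (hlim g) (((hconv g).mono_left hU).const_mul (2 * (K : ℝ))) ?_
    filter_upwards [hU hpos] with n hn
    exact power_average_le T (z n) (q n) K hK hn g hg
  have heq := huniq ν inferInstance hinv hsupp
  rw [← heq]
  exact hlim f
end

section
/- Let (X,T) be a dynamical system and let k ∈ ℕ. If the system (X, T^k) has dense periodic measures, then (X,T) has dense periodic measures. -/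
open MeasureTheory Topology

/-- A dynamical system `(X,T)` has *dense periodic measures* if the finitely supported
`T`-invariant Borel probability measures are dense (in the weak-* topology) in the space of
all `T`-invariant Borel probability measures. -/
def DensePeriodicMeasures {X : Type*} [TopologicalSpace X] [MeasurableSpace X]
    [OpensMeasurableSpace X] (T : X → X) : Prop :=
  ∀ μ : ProbabilityMeasure X, μ.toMeasure.map T = μ.toMeasure →
    μ ∈ closure {ν : ProbabilityMeasure X |
      ν.toMeasure.map T = ν.toMeasure ∧ ∃ s : Finset X, ν.toMeasure ↑s = 1}


/-- The averaged measure `(1/k) ∑_{i<k} (T^i)_* ν`. -/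
noncomputable def avgMeasure {X : Type*} [MeasurableSpace X] (T : X → X) (k : ℕ)
    (ν : Measure X) : Measure X :=
  (k : ENNReal)⁻¹ • ∑ i ∈ Finset.range k, ν.map (T^[i])

lemma avgMeasure_apply {X : Type*} [MeasurableSpace X] {T : X → X} (hT : Measurable T) (k : ℕ)
    (ν : Measure X) {s : Set X} (hs : MeasurableSet s) :
    avgMeasure T k ν s = (k : ENNReal)⁻¹ * ∑ i ∈ Finset.range k, ν (T^[i] ⁻¹' s) := by
  simp only [avgMeasure, Measure.smul_apply, Measure.finsetSum_apply, smul_eq_mul]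
  congr 1
  exact Finset.sum_congr rfl fun i _ => Measure.map_apply (hT.iterate i) hs

lemma avgMeasure_prob {X : Type*} [MeasurableSpace X] {T : X → X} (hT : Measurable T) {k : ℕ}
    (hk : 0 < k) (ν : Measure X) [IsProbabilityMeasure ν] :
    IsProbabilityMeasure (avgMeasure T k ν) := by
  constructor
  rw [avgMeasure_apply hT k ν MeasurableSet.univ]
  simp only [Set.preimage_univ, measure_univ, Finset.sum_const, Finset.card_range, nsmul_eq_mul,
    mul_one]
  exact ENNReal.inv_mul_cancel (by exact_mod_cast hk.ne') (ENNReal.natCast_ne_top k)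

/-- The averaging operator on probability measures. -/
noncomputable def avgProb {X : Type*} [MeasurableSpace X] {T : X → X} (hT : Measurable T) {k : ℕ}
    (hk : 0 < k) (ν : ProbabilityMeasure X) : ProbabilityMeasure X :=
  ⟨avgMeasure T k ν.toMeasure, avgMeasure_prob hT hk _⟩

lemma avgProb_continuous {X : Type*} [TopologicalSpace X] [MeasurableSpace X] [BorelSpace X]
    {T : X → X} (hT : Measurable T) (hTc : Continuous T) {k : ℕ} (hk : 0 < k) :
    Continuous (avgProb hT hk) := by
  rw [continuous_iff_continuousAt]
  intro ν
  unfold ContinuousAt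
  rw [ProbabilityMeasure.tendsto_iff_forall_integral_tendsto]
  intro f
  have key : ∀ ν : ProbabilityMeasure X, ∫ x, f x ∂((avgProb hT hk ν : ProbabilityMeasure X) : Measure X)
      = ((k : ENNReal)⁻¹).toReal * ∑ i ∈ Finset.range k,
        ∫ x, (f.compContinuous ⟨T^[i], hTc.iterate i⟩) x ∂(ν : Measure X) := by
    intro ν
    change ∫ x, f x ∂(avgMeasure T k ν.toMeasure) = _
    rw [avgMeasure, integral_smul_measure, integral_finsetSum_measure]
    · simp only [smul_eq_mul]
      congr 1
      refine Finset.sum_congr rfl fun i _ => ?_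
      rw [integral_map (hT.iterate i).aemeasurable
        f.continuous.measurable.stronglyMeasurable.aestronglyMeasurable]
      rfl
    · intro i _
      have := Measure.isProbabilityMeasure_map (μ := ν.toMeasure) (hT.iterate i).aemeasurable
      exact f.integrable _
  simp only [key]
  refine Filter.Tendsto.const_mul _ (tendsto_finsetSum _ fun i _ => ?_)
  exact (ProbabilityMeasure.tendsto_iff_forall_integral_tendsto.1 Filter.tendsto_id) _

/-- If `(X, T^k)` has dense periodic measures then so does `(X,T)`. -/
theorem densePeriodicMeasures_of_iterate
    {X : Type*} [TopologicalSpace X] [CompactSpace X] [TopologicalSpace.MetrizableSpace X]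
    [MeasurableSpace X] [BorelSpace X]
    (T : X ≃ₜ X) (k : ℕ) (hk : 0 < k)
    (h : DensePeriodicMeasures ((⇑T)^[k])) :
    DensePeriodicMeasures ⇑T := by
  classical
  intro μ hμ
  have hT : Measurable T := T.continuous.measurable
  have hit : ∀ i, μ.toMeasure.map ((⇑T)^[i]) = μ.toMeasure := fun i =>
    ((⟨hT, hμ⟩ : MeasurePreserving T μ.toMeasure μ.toMeasure).iterate i).map_eq
  have hk0 : (k : ENNReal) ≠ 0 := by exact_mod_cast hk.ne'
  have havg : avgProb hT hk μ = μ := by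
    apply Subtype.ext
    change avgMeasure T k μ.toMeasure = μ.toMeasure
    ext s hs
    simp only [avgMeasure, hit, Finset.sum_const, Finset.card_range, Measure.smul_apply,
      nsmul_eq_mul, smul_eq_mul]
    rw [← mul_assoc, ENNReal.inv_mul_cancel hk0 (ENNReal.natCast_ne_top k), one_mul]
  rw [← havg]
  refine map_mem_closure (avgProb_continuous hT T.continuous hk) (h μ (hit k)) ?_
  rintro ν ⟨hν, s, hs⟩
  refine ⟨?_, (Finset.range k).biUnion fun i => s.image (T^[i]), ?_⟩
  · change (avgMeasure T k ν.toMeasure).map T = avgMeasure T k ν.toMeasure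
    ext t ht
    rw [Measure.map_apply hT ht, avgMeasure_apply hT k _ (hT ht), avgMeasure_apply hT k _ ht]
    congr 1
    have e : ∀ i, (⇑T)^[i] ⁻¹' (T ⁻¹' t) = (⇑T)^[i+1] ⁻¹' t := by
      intro i
      rw [Function.iterate_succ', Set.preimage_comp]
    simp only [e]
    have e2 : ν.toMeasure ((⇑T)^[k] ⁻¹' t) = ν.toMeasure ((⇑T)^[0] ⁻¹' t) := by
      rw [← Measure.map_apply (hT.iterate k) ht, hν]
      rfl
    obtain ⟨m, rfl⟩ : ∃ m, k = m + 1 := ⟨k - 1, by omega⟩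
    rw [Finset.sum_range_succ, e2, Finset.sum_range_succ' _ m]
  · change avgMeasure T k ν.toMeasure _ = 1
    rw [avgMeasure_apply hT k _ (Finset.measurableSet _)]
    have e : ∀ i ∈ Finset.range k, ν.toMeasure ((⇑T)^[i] ⁻¹'
        (((Finset.range k).biUnion fun i => s.image (T^[i]) : Finset X) : Set X)) = 1 := by
      intro i hi
      refine le_antisymm prob_le_one (hs.symm.le.trans (measure_mono ?_))
      intro x hx
      simp only [Set.mem_preimage, Finset.mem_coe, Finset.mem_biUnion, Finset.mem_image]
      exact ⟨i, hi, x, hx, rfl⟩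
    rw [Finset.sum_congr rfl e]
    simp only [Finset.sum_const, Finset.card_range, nsmul_eq_mul, mul_one]
    exact ENNReal.inv_mul_cancel hk0 (ENNReal.natCast_ne_top k)
end
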